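/- Let R be a commutative ring, S a multiplicative subset of R, viewed also as a multiplicative subset of the polynomial ring R[x] via the constant embedding. If P is an R[x]-module that is S-projective over R[x] (i.e., Ext^1_{R[x]}(P, N) is uniformly S-torsion for every R[x]-module N), then P, regarded as an R-module by restriction of scalars, is S-projective over R (i.e., Ext^1_R(P, N) is uniformly S-torsion for every R-module N). -/

import Mathlib

open CategoryTheory

universe u

/-- A scalar `a` annihilates the homology of a short complex of modules if and only if
it sends every cycle to a boundary. -/
theorem CategoryTheory.ShortComplex.smul_homology_eq_zero_iff {A : Type*} [CommRing A]
    (T : ShortComplex (ModuleCat A)) (a : A) :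
    (∀ x : T.homology, a • x = 0) ↔ ∀ z : T.X₂, T.g z = 0 → ∃ y : T.X₁, T.f y = a • z := by
  let e := T.moduleCatHomologyIso.toLinearEquiv
  constructor
  · intro h z hz
    let z' : LinearMap.ker T.g.hom := ⟨z, hz⟩
    have h₀ : (LinearMap.range T.moduleCatToCycles).mkQ (a • z') = 0 :=
      e.symm.injective <| (e.symm.map_smul a ((LinearMap.range T.moduleCatToCycles).mkQ z')).trans <|
        (h _).trans e.symm.map_zero.symm
    obtain ⟨y, hy⟩ := (Submodule.Quotient.mk_eq_zero _).1 h₀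
    exact ⟨y, congrArg Subtype.val hy⟩
  · intro h x
    apply e.injective
    rw [map_zero, map_smul]
    obtain ⟨⟨z, hz⟩, hx⟩ := (LinearMap.range T.moduleCatToCycles).mkQ_surjective (e x)
    obtain ⟨y, hy⟩ := h z hz
    rw [← hx]
    refine (map_smul (LinearMap.range T.moduleCatToCycles).mkQ a ⟨z, hz⟩).symm.trans ?_
    exact (Submodule.Quotient.mk_eq_zero _).2 ⟨y, Subtype.ext hy⟩

/-- A scalar `a` annihilates `Ext¹(X, Y)` if and only if, in a projective resolution of `X`,
`a` sends every `1`-cocycle with values in `Y` to a coboundary. -/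
theorem CategoryTheory.ProjectiveResolution.smul_ext_one_eq_zero_iff {A : Type u} [CommRing A]
    {X : ModuleCat.{u} A} (Q : ProjectiveResolution X) (Y : ModuleCat.{u} A) (a : A) :
    (∀ x : ((Ext A (ModuleCat.{u} A) 1).obj (Opposite.op X)).obj Y, a • x = 0) ↔
      ∀ f : Q.complex.X 1 ⟶ Y, Q.complex.d 2 1 ≫ f = 0 →
        ∃ g : Q.complex.X 0 ⟶ Y, Q.complex.d 1 0 ≫ g = a • f := by
  let K := Q.complex.linearYonedaObj A Y
  let e : _ ≃ₗ[A] (K.sc' 0 1 2).homology :=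
    (Q.isoExt (R := A) 1 Y ≪≫ ShortComplex.homologyMapIso
      (K.isoSc' 0 1 2 (by simp) (by simp))).toLinearEquiv
  refine Iff.trans ?_ (ShortComplex.smul_homology_eq_zero_iff (K.sc' 0 1 2) a)
  constructor
  · intro h x
    apply e.symm.injective
    rw [map_zero, map_smul]
    exact h _
  · intro h x
    apply e.injective
    rw [map_zero, map_smul]
    exact h _

/-- A projective module over a free algebra is projective over the base ring. -/
theorem Module.Projective.restrictScalars_of_free (R A M : Type*) [CommRing R] [CommRing A]
    [Algebra R A] [Module.Free R A] [AddCommGroup M] [Module A M] [Module R M]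
    [IsScalarTower R A M] [Module.Projective A M] : Module.Projective R M := by
  obtain ⟨s, hs⟩ := Module.projective_def'.1 (inferInstance : Module.Projective A M)
  exact Module.Projective.of_split (s.restrictScalars R)
    ((Finsupp.linearCombination A id).restrictScalars R)
    (LinearMap.ext fun x => LinearMap.congr_fun hs x)

theorem ModuleCat.preservesProjectiveObjects_restrictScalars_algebraMap (R A : Type u) [CommRing R]
    [CommRing A] [Algebra R A] [Module.Free R A] :
    (ModuleCat.restrictScalars.{u} (algebraMap R A)).PreservesProjectiveObjects where
  projective_obj {M} _ := by
    let : Module R M := Module.compHom M (algebraMap R A)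
    have : IsScalarTower R A M := IsScalarTower.of_algebraMap_smul fun _ _ => rfl
    have := Module.Projective.restrictScalars_of_free R A M
    exact ModuleCat.projective_of_categoryTheory_projective (ModuleCat.of R M)

/-- If `φ s` sends every cocycle with values in the coextension of scalars of `N` to a coboundary,
then `s` sends every cocycle of the restricted complex with values in `N` to a coboundary. -/
theorem ModuleCat.exists_comp_eq_smul_of_coextendScalars {R A : Type u} [CommRing R] [CommRing A]
    (φ : R →+* A) {M₂ M₁ M₀ : ModuleCat.{u} A} (d₂ : M₂ ⟶ M₁) (d₁ : M₁ ⟶ M₀) (N : ModuleCat.{u} R)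
    (s : R)
    (h : ∀ f : M₁ ⟶ (ModuleCat.coextendScalars φ).obj N, d₂ ≫ f = 0 →
      ∃ g : M₀ ⟶ (ModuleCat.coextendScalars φ).obj N, d₁ ≫ g = φ s • f)
    (f : (ModuleCat.restrictScalars φ).obj M₁ ⟶ N)
    (hf : (ModuleCat.restrictScalars φ).map d₂ ≫ f = 0) :
    ∃ g : (ModuleCat.restrictScalars φ).obj M₀ ⟶ N,
      (ModuleCat.restrictScalars φ).map d₁ ≫ g = s • f := by
  let adj := ModuleCat.restrictCoextendScalarsAdj.{u} φ
  obtain ⟨g, hg⟩ := h (adj.homEquiv _ _ f) <| by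
    rw [← adj.homEquiv_naturality_left, hf, adj.homEquiv_unit, Functor.map_zero, Limits.comp_zero]
  refine ⟨(adj.homEquiv _ _).symm g, ?_⟩
  rw [← adj.homEquiv_naturality_left_symm, hg]
  ext x
  change f.hom (((1 : A) * φ s) • (show M₁ from x)) = s • f.hom x
  rw [one_mul]
  exact f.hom.map_smul s x

/-- If an `R[x]`-module `P` is `S`-projective over `R[x]` (where `S ⊆ R` is viewed in `R[x]`
via the constant embedding), then `P` is `S`-projective over `R` by restriction of scalars. -/
theorem stmt17 {R : Type u} [CommRing R] (S : Submonoid R)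
    (P : Type u) [AddCommGroup P] [Module (Polynomial R) P] [Module R P]
    [IsScalarTower R (Polynomial R) P]
    (h : ∀ N : ModuleCat.{u} (Polynomial R), ∃ s ∈ S,
      ∀ x : ((Ext (Polynomial R) (ModuleCat.{u} (Polynomial R)) 1).obj
          (Opposite.op (ModuleCat.of (Polynomial R) P))).obj N,
        (Polynomial.C s : Polynomial R) • x = 0) :
    ∀ N : ModuleCat.{u} R, ∃ s ∈ S,
      ∀ x : ((Ext R (ModuleCat.{u} R) 1).obj (Opposite.op (ModuleCat.of R P))).obj N,
        s • x = 0 := by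
  intro N
  let F := ModuleCat.restrictScalars.{u} (algebraMap R (Polynomial R))
  have : F.PreservesProjectiveObjects :=
    ModuleCat.preservesProjectiveObjects_restrictScalars_algebraMap R (Polynomial R)
  let Q := ProjectiveResolution.of (ModuleCat.of (Polynomial R) P)
  obtain ⟨s, hs, hN⟩ := h ((ModuleCat.coextendScalars (algebraMap R (Polynomial R))).obj N)
  rw [Q.smul_ext_one_eq_zero_iff] at hN
  refine ⟨s, hs, ?_⟩
  let i : ModuleCat.of R P ≅ F.obj (ModuleCat.of (Polynomial R) P) :=
    (show ModuleCat.of R P ≃ₗ[R] F.obj (ModuleCat.of (Polynomial R) P) from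
      { AddEquiv.refl P with
        map_smul' := fun r p => (algebraMap_smul (Polynomial R) r p).symm }).toModuleIso
  let e := (((Ext R (ModuleCat.{u} R) 1).mapIso i.op).app N).toLinearEquiv
  suffices H : ∀ x : ((Ext R (ModuleCat.{u} R) 1).obj
      (Opposite.op (F.obj (ModuleCat.of (Polynomial R) P)))).obj N, s • x = 0 by
    intro x
    apply e.symm.injective
    rw [map_zero, map_smul]
    exact H _
  rw [(F.mapProjectiveResolution Q).smul_ext_one_eq_zero_iff]
  exact ModuleCat.exists_comp_eq_smul_of_coextendScalars (algebraMap R (Polynomial R))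
    (Q.complex.d 2 1) (Q.complex.d 1 0) N s hN
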